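/- Let K = [[A, B],[Bᵀ, 0]] be an F-matrix with A ∈ ℝ^{n×n}, B ∈ ℝ^{n×m}, such that every nonzero entry of B has absolute value 1, and let i, j be indices with B_{ij} ≠ 0. Then every nonzero entry of the velocity–pressure block of the Schur complement of K with respect to the 2×2 pivot on indices (velocity i, pressure j) also has absolute value 1. -/

import Mathlib

open Matrix

/-- A real matrix is a gradient-matrix if every row has at most two nonzero
entries and every row sums to zero. -/
def IsGradientMatrix {α β : Type*} [Fintype α] [Fintype β] [DecidableEq β]
    (B : Matrix α β ℝ) : Prop :=
  ∀ i : α, (Finset.univ.filter fun j => B i j ≠ 0).card ≤ 2 ∧ ∑ j, B i j = 0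

/-- Positive definiteness (symmetry not assumed): `xᵀ A x > 0` for all `x ≠ 0`. -/
def IsPosDefQuad {α : Type*} [Fintype α] (A : Matrix α α ℝ) : Prop :=
  ∀ x : α → ℝ, x ≠ 0 → 0 < x ⬝ᵥ A.mulVec x

/-- The saddle point matrix `K = [[A, B], [Bᵀ, 0]]`. -/
def saddleMatrix {n m : ℕ} (A : Matrix (Fin n) (Fin n) ℝ) (B : Matrix (Fin n) (Fin m) ℝ) :
    Matrix (Fin n ⊕ Fin m) (Fin n ⊕ Fin m) ℝ :=
  Matrix.fromBlocks A B Bᵀ 0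

/-- The embedding of the 2×2 pivot index pair (velocity `i`, pressure `j`). -/
def pivotEmb {n m : ℕ} (i : Fin n) (j : Fin m) : Fin 2 → (Fin n ⊕ Fin m) :=
  ![Sum.inl i, Sum.inr j]

/-- The embedding of the remaining indices: velocities other than `i` followed by
pressures other than `j`. -/
def restEmb {n m : ℕ} (i : Fin n) (j : Fin m) :
    ({i' : Fin n // i' ≠ i} ⊕ {j' : Fin m // j' ≠ j}) → (Fin n ⊕ Fin m) :=
  Sum.map Subtype.val Subtype.val

/-- The Schur complement `K_RR − K_RP P⁻¹ K_PR` of the saddle point matrix with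
respect to the 2×2 pivot on (velocity `i`, pressure `j`). -/
noncomputable def schurPivot2 {n m : ℕ} (A : Matrix (Fin n) (Fin n) ℝ)
    (B : Matrix (Fin n) (Fin m) ℝ) (i : Fin n) (j : Fin m) :
    Matrix ({i' : Fin n // i' ≠ i} ⊕ {j' : Fin m // j' ≠ j})
           ({i' : Fin n // i' ≠ i} ⊕ {j' : Fin m // j' ≠ j}) ℝ :=
  (saddleMatrix A B).submatrix (restEmb i j) (restEmb i j) -
    (saddleMatrix A B).submatrix (restEmb i j) (pivotEmb i j) *
      ((saddleMatrix A B).submatrix (pivotEmb i j) (pivotEmb i j))⁻¹ *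
        (saddleMatrix A B).submatrix (pivotEmb i j) (restEmb i j)

/-! Eliminating the pivot replaces `B i' j'` by `B i' j' - B i' j * B i j' / B i j`. In row `i` of
a gradient-matrix the entries `B i j` and `B i j'` are opposite unless `B i j' = 0`, so this is
either `B i' j'` or `B i' j' + B i' j`. Two entries of row `i'` in turn cancel unless one of them
is zero, hence a nonzero entry of the velocity–pressure block is already an entry of row `i'` of
`B`. -/

theorem inv_fin_two_bottom_right_zero {K : Type*} [Field K] (a : K) {b c : K}
    (hb : b ≠ 0) (hc : c ≠ 0) :
    !![a, b; c, 0]⁻¹ = !![0, c⁻¹; b⁻¹, -a / (b * c)] := by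
  refine Matrix.inv_eq_right_inv ?_
  rw [Matrix.mul_fin_two, Matrix.one_fin_two]
  congr! <;> field_simp <;> ring

theorem saddleMatrix_submatrix_pivotEmb {n m : ℕ} (A : Matrix (Fin n) (Fin n) ℝ)
    (B : Matrix (Fin n) (Fin m) ℝ) (i : Fin n) (j : Fin m) :
    (saddleMatrix A B).submatrix (pivotEmb i j) (pivotEmb i j) =
      !![A i i, B i j; B i j, 0] := by
  ext a b
  fin_cases a <;> fin_cases b <;> rfl

theorem schurPivot2_inl_inr {n m : ℕ} (A : Matrix (Fin n) (Fin n) ℝ)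
    (B : Matrix (Fin n) (Fin m) ℝ) {i : Fin n} {j : Fin m} (hij : B i j ≠ 0)
    (i' : {i' : Fin n // i' ≠ i}) (j' : {j' : Fin m // j' ≠ j}) :
    schurPivot2 A B i j (Sum.inl i') (Sum.inr j') =
      B i' j' - B i' j * B i j' / B i j := by
  rw [schurPivot2, saddleMatrix_submatrix_pivotEmb, inv_fin_two_bottom_right_zero _ hij hij]
  simp only [Matrix.sub_apply, Matrix.mul_apply, Fin.sum_univ_two, Matrix.submatrix_apply]
  simp [saddleMatrix, pivotEmb, restEmb, div_eq_mul_inv, mul_right_comm]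

namespace IsGradientMatrix

variable {α β : Type*} [Fintype α] [Fintype β] [DecidableEq β] {B : Matrix α β ℝ}

theorem add_eq_zero (hB : IsGradientMatrix B) {k : α} {l l' : β} (hne : l ≠ l')
    (hl : B k l ≠ 0) (hl' : B k l' ≠ 0) : B k l + B k l' = 0 := by
  obtain ⟨hcard, hsum⟩ := hB k
  have hsupport : {l, l'} = Finset.univ.filter fun p => B k p ≠ 0 :=
    Finset.eq_of_subset_of_card_le (by simp [Finset.insert_subset_iff, hl, hl'])
      (hcard.trans_eq (Finset.card_pair hne).symm)
  rwa [← Finset.sum_filter_ne_zero, ← hsupport, Finset.sum_pair hne] at hsum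

theorem add_eq_left_or_right (hB : IsGradientMatrix B) {k : α} {l l' : β} (hne : l ≠ l')
    (hadd : B k l + B k l' ≠ 0) :
    B k l + B k l' = B k l ∨ B k l + B k l' = B k l' := by
  by_cases hl : B k l = 0
  · simp [hl]
  · have hl' : B k l' = 0 := by
      by_contra hl'
      exact hadd (hB.add_eq_zero hne hl hl')
    simp [hl']

theorem sub_mul_div_eq_or_eq_add (hB : IsGradientMatrix B) {i : α} {j j' : β} (hne : j' ≠ j)
    (hij : B i j ≠ 0) (i' : α) :
    B i' j' - B i' j * B i j' / B i j = B i' j' ∨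
      B i' j' - B i' j * B i j' / B i j = B i' j' + B i' j := by
  by_cases hij' : B i j' = 0
  · simp [hij']
  · right
    rw [eq_neg_of_add_eq_zero_left (hB.add_eq_zero hne hij' hij)]
    field_simp
    ring

theorem schurPivot2_inl_inr_eq_or_eq {n m : ℕ} {B : Matrix (Fin n) (Fin m) ℝ}
    (hB : IsGradientMatrix B) (A : Matrix (Fin n) (Fin n) ℝ) {i : Fin n} {j : Fin m}
    (hij : B i j ≠ 0) {i' : {i' : Fin n // i' ≠ i}} {j' : {j' : Fin m // j' ≠ j}}
    (hne : schurPivot2 A B i j (Sum.inl i') (Sum.inr j') ≠ 0) :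
    schurPivot2 A B i j (Sum.inl i') (Sum.inr j') = B i' j' ∨
      schurPivot2 A B i j (Sum.inl i') (Sum.inr j') = B i' j := by
  rw [schurPivot2_inl_inr A B hij] at hne ⊢
  rcases hB.sub_mul_div_eq_or_eq_add j'.2 hij i' with h | h
  · exact Or.inl h
  · rw [h] at hne ⊢
    exact hB.add_eq_left_or_right j'.2 hne

end IsGradientMatrix

theorem schur_VP_block_entries_unit_magnitude_general
    {n m : ℕ} (A : Matrix (Fin n) (Fin n) ℝ) {B : Matrix (Fin n) (Fin m) ℝ}
    (hB : IsGradientMatrix B) {i : Fin n} {j : Fin m} (hij : B i j ≠ 0)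
    (i' : {i' : Fin n // i' ≠ i}) (j' : {j' : Fin m // j' ≠ j}) {c : ℝ}
    (hrow : ∀ k, B i' k ≠ 0 → |B i' k| = c)
    (hne : schurPivot2 A B i j (Sum.inl i') (Sum.inr j') ≠ 0) :
    |schurPivot2 A B i j (Sum.inl i') (Sum.inr j')| = c := by
  rcases hB.schurPivot2_inl_inr_eq_or_eq A hij hne with h | h <;>
    rw [h] at hne ⊢ <;> exact hrow _ hne

/-- If all nonzero entries of `B` have absolute value 1, then all
nonzero entries of the velocity–pressure block of the Schur complement with respect
to the 2×2 pivot on (velocity `i`, pressure `j`) also have absolute value 1. -/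
theorem schur_VP_block_entries_unit_magnitude
    {n m : ℕ} (A : Matrix (Fin n) (Fin n) ℝ) (B : Matrix (Fin n) (Fin m) ℝ)
    (hA : IsPosDefQuad A) (hB : IsGradientMatrix B)
    (hB1 : ∀ (i : Fin n) (j : Fin m), B i j ≠ 0 → |B i j| = 1)
    (i : Fin n) (j : Fin m) (hij : B i j ≠ 0) :
    ∀ (i' : {i' : Fin n // i' ≠ i}) (j' : {j' : Fin m // j' ≠ j}),
      schurPivot2 A B i j (Sum.inl i') (Sum.inr j') ≠ 0 →
        |schurPivot2 A B i j (Sum.inl i') (Sum.inr j')| = 1 :=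
  fun i' j' => schur_VP_block_entries_unit_magnitude_general A hB hij i' j' (hB1 i')
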